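/- For every y₀ ∈ ℝ and every choice of parameters k ≥ 0, ℓ ≥ −1/2, L₀ > 0, there exists a unique C¹ function y : [0,∞) → ℝ with y(0) = y₀ which is a quasi shell solution, i.e. with ϱ, p, m defined from y by the ansatz formulas one has 2m(r)/r < 1 and y′(r) = −(1 − 2m(r)/r)^{−1}[4πr p(r) + m(r)/r²] for all r > 0; moreover ϱ and p vanish on (0, R₀]. -/

import Mathlib

open MeasureTheory Real Set Filter

/-- The constant `c_ℓ = 2π ∫₀¹ s^ℓ (1-s)^{-1/2} ds`. -/
noncomputable def cConst (ℓ : ℝ) : ℝ :=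
  2 * π * ∫ s in Set.Ioc (0 : ℝ) 1, s ^ ℓ / Real.sqrt (1 - s)

/-- Energy density of the massless Einstein--Vlasov ansatz. -/
noncomputable def rho (k ℓ L0 : ℝ) (y : ℝ → ℝ) (r : ℝ) : ℝ :=
  cConst ℓ * r ^ (2 * ℓ) *
    ∫ ε in Set.Ioc (Real.sqrt L0 / r) (Real.exp (y r)),
      (1 - ε * Real.exp (-(y r))) ^ k * ε ^ 2 * (ε ^ 2 - L0 / r ^ 2) ^ (ℓ + 1 / 2)

/-- Radial pressure of the massless Einstein--Vlasov ansatz. -/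
noncomputable def pres (k ℓ L0 : ℝ) (y : ℝ → ℝ) (r : ℝ) : ℝ :=
  (cConst ℓ / (2 * ℓ + 3)) * r ^ (2 * ℓ) *
    ∫ ε in Set.Ioc (Real.sqrt L0 / r) (Real.exp (y r)),
      (1 - ε * Real.exp (-(y r))) ^ k * (ε ^ 2 - L0 / r ^ 2) ^ (ℓ + 3 / 2)

/-- The Hawking mass `m(r) = 4π ∫₀ʳ s² ϱ(s) ds`. -/
noncomputable def hawkingMass (k ℓ L0 : ℝ) (y : ℝ → ℝ) (r : ℝ) : ℝ :=
  4 * π * ∫ s in Set.Ioc (0 : ℝ) r, s ^ 2 * rho k ℓ L0 y s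

/-- The characteristic function `γ(r) = y(r) - (1/2) ln (L₀ / r²)`. -/
noncomputable def charFn (L0 : ℝ) (y : ℝ → ℝ) (r : ℝ) : ℝ :=
  y r - (1 / 2) * Real.log (L0 / r ^ 2)

/-- The inner radius `R₀ = √L₀ e^{-y(0)}`. -/
noncomputable def innerRadius (L0 : ℝ) (y : ℝ → ℝ) : ℝ :=
  Real.sqrt L0 * Real.exp (-(y 0))

/-- A quasi shell solution of the massless Einstein--Vlasov system. -/
def QuasiShell (k ℓ L0 : ℝ) (y : ℝ → ℝ) : Prop :=
  ContDiffOn ℝ 1 y (Set.Ici 0) ∧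
  ∀ r > 0, 2 * hawkingMass k ℓ L0 y r / r < 1 ∧
    HasDerivAt y
      (-(1 - 2 * hawkingMass k ℓ L0 y r / r)⁻¹ *
        (4 * π * r * pres k ℓ L0 y r + hawkingMass k ℓ L0 y r / r ^ 2)) r

/-!
After the substitution `ε = e^y t` both matter quantities become smooth factors times
`∫ₐ¹ w(t) (t² - a²)ˢ dt` with `a = √L₀ / (r e^y)` and `s ≥ 0`. This integral is Lipschitz in `a`
although its integrand need not be, and it vanishes as soon as `a ≥ 1`. Hence `(y, m)` solves a
locally Lipschitz, but singular, system of ordinary differential equations.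

A solution is nonincreasing, so there is no matter up to `R₀ = √L₀ e^{-y₀}` and `y` is constant
there; from `R₀ > 0` on, the only obstruction to global existence is the degeneration of
`1 - 2m/r`. Solve the system with its right-hand side truncated to a rectangle, and compare
`1 - 2m/r` with the barrier `½ exp (A (e^y - e^{y₀}))`: it never drops below it, so the truncation
is never active. Uniqueness beyond `R₀` is uniqueness for locally Lipschitz systems.
-/

open scoped NNReal Topology

section LocallyLipschitz

variable {X Y Z : Type*} [PseudoEMetricSpace X] [PseudoEMetricSpace Y] [PseudoEMetricSpace Z]

theorem locallyLipschitzOn_comp {g : Y → Z} {f : X → Y} {s : Set X} {t : Set Y}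
    (hg : LocallyLipschitzOn t g) (hf : LocallyLipschitzOn s f) (hst : MapsTo f s t) :
    LocallyLipschitzOn s (g ∘ f) := by
  intro x hx
  obtain ⟨Kg, u, hu, hgu⟩ := hg (hst hx)
  obtain ⟨Kf, v, hv, hfv⟩ := hf hx
  have hu' : f ⁻¹' u ∈ 𝓝[s] x := (hf.continuousOn x hx).tendsto_nhdsWithin hst hu
  exact ⟨Kg * Kf, v ∩ f ⁻¹' u, inter_mem hv hu',
    hgu.comp (hfv.mono inter_subset_left) fun _ h => h.2⟩

theorem locallyLipschitzOn_congr {f g : X → Y} {s : Set X} (hf : LocallyLipschitzOn s f)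
    (hgf : EqOn g f s) : LocallyLipschitzOn s g := by
  intro x hx
  obtain ⟨K, t, ht, hK⟩ := hf hx
  refine ⟨K, t ∩ s, inter_mem ht self_mem_nhdsWithin, fun u hu v hv => ?_⟩
  rw [hgf hu.2, hgf hv.2]
  exact hK hu.1 hv.1

theorem locallyLipschitzOn_prodMk {f : X → Y} {g : X → Z} {s : Set X}
    (hf : LocallyLipschitzOn s f) (hg : LocallyLipschitzOn s g) :
    LocallyLipschitzOn s fun x => (f x, g x) := by
  intro x hx
  obtain ⟨Kf, u, hu, hfu⟩ := hf hx
  obtain ⟨Kg, v, hv, hgv⟩ := hg hx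
  exact ⟨max Kf Kg, u ∩ v, inter_mem hu hv,
    (hfu.mono inter_subset_left).prodMk (hgv.mono inter_subset_right)⟩

theorem locallyLipschitzOn_of_contDiffAt {E F : Type*} [NormedAddCommGroup E] [NormedSpace ℝ E]
    [NormedAddCommGroup F] [NormedSpace ℝ F] {f : E → F} {s : Set E}
    (hf : ∀ x ∈ s, ContDiffAt ℝ 1 f x) : LocallyLipschitzOn s f := by
  intro x hx
  obtain ⟨K, t, ht, hKt⟩ := (hf x hx).exists_lipschitzOnWith
  exact ⟨K, t, mem_nhdsWithin_of_mem_nhds ht, hKt⟩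

end LocallyLipschitz

section IntegralCurve

variable {E : Type*} [NormedAddCommGroup E] [NormedSpace ℝ E] {v : ℝ → E → E} {a b : ℝ}

theorem hasDerivWithinAt_Ici_of_Icc {f : ℝ → E} {f' : E} {t : ℝ}
    (hf : HasDerivWithinAt f f' (Icc a b) t) (ht : t ∈ Ico a b) :
    HasDerivWithinAt f f' (Ici t) t :=
  (hf.mono (Icc_subset_Icc_left ht.1)).mono_of_mem_nhdsWithin (Icc_mem_nhdsGE ht.2)

theorem eqOn_of_isIntegralCurveOn_Icc {Ω : Set (ℝ × E)} {f g : ℝ → E}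
    (hv : LocallyLipschitzOn Ω (Function.uncurry v))
    (hf : IsIntegralCurveOn f v (Icc a b)) (hfΩ : ∀ t ∈ Icc a b, (t, f t) ∈ Ω)
    (hg : IsIntegralCurveOn g v (Icc a b)) (hgΩ : ∀ t ∈ Icc a b, (t, g t) ∈ Ω)
    (hfg : f a = g a) : EqOn f g (Icc a b) := by
  have graph_compact {h : ℝ → E} (hh : IsIntegralCurveOn h v (Icc a b)) :
      IsCompact ((fun t => (t, h t)) '' Icc a b) :=
    isCompact_Icc.image_of_continuousOn (continuousOn_id.prodMk hh.continuousOn)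
  set C := (fun t => (t, f t)) '' Icc a b ∪ (fun t => (t, g t)) '' Icc a b
  have hCΩ : C ⊆ Ω := union_subset (image_subset_iff.2 hfΩ) (image_subset_iff.2 hgΩ)
  obtain ⟨K, hK⟩ := (hv.mono hCΩ).exists_lipschitzOnWith_of_compact
    ((graph_compact hf).union (graph_compact hg))
  refine ODE_solution_unique_of_mem_Icc_right (v := v) (s := fun t => {x | (t, x) ∈ C}) (K := K)
    (fun t _ x hx x' hx' => ?_)
    hf.continuousOn (fun t ht => hasDerivWithinAt_Ici_of_Icc (hf t (Ico_subset_Icc_self ht)) ht)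
    (fun t ht => Or.inl (mem_image_of_mem _ (Ico_subset_Icc_self ht)))
    hg.continuousOn (fun t ht => hasDerivWithinAt_Ici_of_Icc (hg t (Ico_subset_Icc_self ht)) ht)
    (fun t ht => Or.inr (mem_image_of_mem _ (Ico_subset_Icc_self ht))) hfg
  simpa [Function.uncurry, Prod.edist_eq] using hK hx hx'

theorem exists_isIntegralCurveOn_Icc_of_bounded [ProperSpace E] {L : ℝ≥0}
    (hab : a ≤ b) (hv : LocallyLipschitzOn (Icc a b ×ˢ univ) (Function.uncurry v))
    (hL : ∀ t ∈ Icc a b, ∀ x, ‖v t x‖ ≤ L) (x₀ : E) :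
    ∃ f : ℝ → E, f a = x₀ ∧ IsIntegralCurveOn f v (Icc a b) := by
  set R : ℝ≥0 := L * (b - a).toNNReal with hR
  obtain ⟨K, hK⟩ := (hv.mono (prod_mono_right (subset_univ (Metric.closedBall x₀ R))))
    |>.exists_lipschitzOnWith_of_compact (isCompact_Icc.prod (isCompact_closedBall x₀ R))
  have hPL : IsPicardLindelof v (⟨a, left_mem_Icc.2 hab⟩ : Icc a b) x₀ R 0 L K :=
    { lipschitzOnWith := fun t ht x hx x' hx' => by
        simpa [Function.uncurry, Prod.edist_eq] using hK (mk_mem_prod ht hx) (mk_mem_prod ht hx')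
      continuousOn := fun x _ => hv.continuousOn.comp (f := fun t => (t, x)) (by fun_prop)
        fun t ht => mk_mem_prod ht (mem_univ x)
      norm_le := fun t ht x _ => hL t ht x
      mul_max_le := by simp [hR, hab] }
  exact hPL.exists_eq_forall_mem_Icc_hasDerivWithinAt₀

theorem exists_isIntegralCurveOn_Ici {Ω : Set (ℝ × E)} {x₀ : E}
    (hv : LocallyLipschitzOn Ω (Function.uncurry v))
    (h : ∀ b > a, ∃ f : ℝ → E, f a = x₀ ∧ IsIntegralCurveOn f v (Icc a b) ∧
      ∀ t ∈ Icc a b, (t, f t) ∈ Ω) :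
    ∃ f : ℝ → E, f a = x₀ ∧ IsIntegralCurveOn f v (Ici a) ∧ ∀ t ∈ Ici a, (t, f t) ∈ Ω := by
  choose! F hF₀ hF hFΩ using h
  have F_eqOn {b c : ℝ} (hb : a < b) (hbc : b ≤ c) : EqOn (F b) (F c) (Icc a b) :=
    eqOn_of_isIntegralCurveOn_Icc hv (hF b hb) (hFΩ b hb)
      ((hF c (hb.trans_le hbc)).mono (Icc_subset_Icc_right hbc))
      (fun t ht => hFΩ c (hb.trans_le hbc) t ⟨ht.1, ht.2.trans hbc⟩)
      ((hF₀ b hb).trans (hF₀ c (hb.trans_le hbc)).symm)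
  have f_eqOn {b : ℝ} (hb : a < b) : EqOn (fun t => F (t + 1) t) (F b) (Icc a b) := by
    intro t ht
    rcases le_total (t + 1) b with htb | htb
    · exact F_eqOn (by linarith [ht.1]) htb ⟨ht.1, by linarith⟩
    · exact (F_eqOn hb htb ht).symm
  refine ⟨fun t => F (t + 1) t, hF₀ _ (by linarith), fun t ht => ?_, fun t ht => ?_⟩
  · have hat : a < t + 1 := by linarith [mem_Ici.1 ht]
    have htmem : t ∈ Icc a (t + 1) := ⟨ht, by linarith⟩
    refine ((hF _ hat t htmem).congr (f_eqOn hat) (f_eqOn hat htmem)).mono_of_mem_nhdsWithin ?_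
    exact mem_nhdsWithin.2 ⟨Iio (t + 1), isOpen_Iio, lt_add_one t, fun s hs => ⟨hs.2, hs.1.le⟩⟩
  · exact hFΩ (t + 1) (by linarith [mem_Ici.1 ht]) t ⟨ht, by linarith⟩

theorem hasDerivAt_comp_max {f f' : ℝ → E} (hf : ∀ t ∈ Ici a, HasDerivWithinAt f (f' t) (Ici a) t)
    (ha : f' a = 0) (t : ℝ) : HasDerivAt (fun t => f (max a t)) (f' (max a t)) t := by
  have left : ∀ t ∈ Iic a, HasDerivWithinAt (fun t => f (max a t)) (f' (max a t)) (Iic a) t := by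
    intro t ht
    rw [max_eq_left ht, ha]
    exact (hasDerivWithinAt_const t _ (f a)).congr (fun s hs => by rw [max_eq_left hs])
      (by rw [max_eq_left ht])
  have right : ∀ t ∈ Ici a, HasDerivWithinAt (fun t => f (max a t)) (f' (max a t)) (Ici a) t := by
    intro t ht
    rw [max_eq_right ht]
    exact (hf t ht).congr (fun s hs => by rw [max_eq_right hs]) (by rw [max_eq_right ht])
  rcases lt_trichotomy t a with h | rfl | h
  · exact (left t h.le).hasDerivAt (Iic_mem_nhds h)
  · rw [← hasDerivWithinAt_univ, ← Iic_union_Ici]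
    exact (left t self_mem_Iic).union (right t self_mem_Ici)
  · exact (right t h.le).hasDerivAt (Ici_mem_nhds h)

end IntegralCurve

section Components

variable {𝕜 E F : Type*} [NontriviallyNormedField 𝕜] [NormedAddCommGroup E] [NormedSpace 𝕜 E]
  [NormedAddCommGroup F] [NormedSpace 𝕜 F] {f : 𝕜 → E × F} {f' : E × F} {s : Set 𝕜} {t : 𝕜}

theorem hasDerivWithinAt_fst (hf : HasDerivWithinAt f f' s t) :
    HasDerivWithinAt (fun t => (f t).1) f'.1 s t :=
  (ContinuousLinearMap.fst 𝕜 E F).hasFDerivAt.comp_hasDerivWithinAt t hf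

theorem hasDerivWithinAt_snd (hf : HasDerivWithinAt f f' s t) :
    HasDerivWithinAt (fun t => (f t).2) f'.2 s t :=
  (ContinuousLinearMap.snd 𝕜 E F).hasFDerivAt.comp_hasDerivWithinAt t hf

end Components

section MonotoneComponents

variable {E : Type*} [NormedAddCommGroup E] [NormedSpace ℝ E] {s : Set ℝ}

theorem antitoneOn_fst_of_isIntegralCurveOn {v : ℝ → ℝ × E → ℝ × E} {c : ℝ → ℝ × E}
    (hs : Convex ℝ s) (hc : IsIntegralCurveOn c v s) (h : ∀ t ∈ s, (v t (c t)).1 ≤ 0) :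
    AntitoneOn (fun t => (c t).1) s :=
  antitoneOn_of_hasDerivWithinAt_nonpos hs (continuous_fst.comp_continuousOn hc.continuousOn)
    (fun t ht => (hasDerivWithinAt_fst (hc t (interior_subset ht))).mono interior_subset)
    fun t ht => h t (interior_subset ht)

theorem monotoneOn_snd_of_isIntegralCurveOn {v : ℝ → E × ℝ → E × ℝ} {c : ℝ → E × ℝ}
    (hs : Convex ℝ s) (hc : IsIntegralCurveOn c v s) (h : ∀ t ∈ s, 0 ≤ (v t (c t)).2) :
    MonotoneOn (fun t => (c t).2) s :=
  monotoneOn_of_hasDerivWithinAt_nonneg hs (continuous_snd.comp_continuousOn hc.continuousOn)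
    (fun t ht => (hasDerivWithinAt_snd (hc t (interior_subset ht))).mono interior_subset)
    fun t ht => h t (interior_subset ht)

end MonotoneComponents

/-- The radial profile `∫ₐ¹ w(t) (t² - a²)ˢ dt`, to which both matter integrals reduce after
rescaling `ε = eʸ t`. -/
noncomputable def profile (w : ℝ → ℝ) (s a : ℝ) : ℝ :=
  ∫ t in Ioc a 1, w t * (t ^ 2 - a ^ 2) ^ s

section Profile

variable {w : ℝ → ℝ} {s a b : ℝ}

theorem profile_eq_zero (ha : 1 ≤ a) : profile w s a = 0 := by
  simp [profile, Ioc_eq_empty (not_lt.2 ha)]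

theorem profile_nonneg (hw : ∀ t ∈ Icc (0 : ℝ) 1, 0 ≤ w t) (ha : 0 ≤ a) : 0 ≤ profile w s a := by
  refine setIntegral_nonneg measurableSet_Ioc fun t ht => ?_
  have hat : a ^ 2 ≤ t ^ 2 := pow_le_pow_left₀ ha ht.1.le 2
  exact mul_nonneg (hw t ⟨ha.trans ht.1.le, ht.2⟩) (rpow_nonneg (sub_nonneg.2 hat) s)

theorem profile_integrand_continuous (hw : Continuous w) (hs : 0 ≤ s) (a : ℝ) :
    Continuous fun t => w t * (t ^ 2 - a ^ 2) ^ s :=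
  hw.mul (Continuous.rpow_const (by fun_prop) fun _ => Or.inr hs)

theorem sq_sub_sq_rpow {t : ℝ} (ha : 0 ≤ a) (hat : a ≤ t) :
    (t ^ 2 - a ^ 2) ^ s = (t + a) ^ s * (t - a) ^ s := by
  rw [sq_sub_sq, mul_rpow (by linarith) (by linarith)]

theorem sq_sub_sq_rpow_le (hs : 0 ≤ s) (ha : 0 ≤ a) {t : ℝ} (ht : t ∈ Icc a 1) :
    (t ^ 2 - a ^ 2) ^ s ≤ 2 ^ s * (t - a) ^ s := by
  rw [sq_sub_sq_rpow ha ht.1]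
  have hta : 0 ≤ t - a := sub_nonneg.2 ht.1
  gcongr <;> linarith [ht.1, ht.2]

theorem sq_sub_sq_rpow_sub_le (hs : 0 ≤ s) (ha : 0 ≤ a) (hab : a ≤ b) {t : ℝ}
    (ht : t ∈ Icc b 1) :
    (t ^ 2 - a ^ 2) ^ s - (t ^ 2 - b ^ 2) ^ s ≤ 2 ^ s * ((t - a) ^ s - (t - b) ^ s) := by
  have htb : 0 ≤ t - b := sub_nonneg.2 ht.1
  have hta : 0 ≤ t - a := by linarith
  have htab : (t - b) ^ s ≤ (t - a) ^ s := rpow_le_rpow htb (by linarith) hs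
  calc (t ^ 2 - a ^ 2) ^ s - (t ^ 2 - b ^ 2) ^ s
      = (t + a) ^ s * (t - a) ^ s - (t + b) ^ s * (t - b) ^ s := by
        rw [sq_sub_sq_rpow ha (hab.trans ht.1), sq_sub_sq_rpow (ha.trans hab) ht.1]
    _ ≤ (t + b) ^ s * (t - a) ^ s - (t + b) ^ s * (t - b) ^ s := by
        gcongr
        linarith
    _ = (t + b) ^ s * ((t - a) ^ s - (t - b) ^ s) := by ring
    _ ≤ 2 ^ s * ((t - a) ^ s - (t - b) ^ s) := by
        refine mul_le_mul_of_nonneg_right ?_ (sub_nonneg.2 htab)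
        exact rpow_le_rpow (by linarith) (by linarith [ht.1, ht.2]) hs

theorem integral_rpow_sub_sub_le (hs : 0 ≤ s) (hab : a ≤ b) (ha : 0 ≤ a) (hb : b ≤ 1) :
    (∫ t in a..1, (t - a) ^ s) - ∫ t in b..1, (t - b) ^ s ≤ b - a := by
  have hi (c d : ℝ) : IntervalIntegrable (fun t : ℝ => t ^ s) volume c d :=
    (continuous_rpow_const hs).intervalIntegrable c d
  rw [intervalIntegral.integral_comp_sub_right (fun t => t ^ s) a,
    intervalIntegral.integral_comp_sub_right (fun t => t ^ s) b, sub_self, sub_self,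
    intervalIntegral.integral_interval_sub_left (hi _ _) (hi _ _)]
  calc ∫ t in (1 - b)..(1 - a), t ^ s ≤ ∫ _ in (1 - b)..(1 - a), (1 : ℝ) := by
        refine intervalIntegral.integral_mono_on (by linarith) (hi _ _) (by simp) fun t ht => ?_
        exact rpow_le_one (by linarith [ht.1]) (by linarith [ht.2]) hs
    _ = b - a := by simp

theorem profile_sub_eq (hw : Continuous w) (hs : 0 ≤ s) (hab : a ≤ b) (hb : b ≤ 1) :
    profile w s a - profile w s b = (∫ t in a..b, w t * (t ^ 2 - a ^ 2) ^ s) +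
      ∫ t in b..1, w t * ((t ^ 2 - a ^ 2) ^ s - (t ^ 2 - b ^ 2) ^ s) := by
  have hi (c d e : ℝ) := (profile_integrand_continuous hw hs c).intervalIntegrable (μ := volume) d e
  simp only [profile, mul_sub]
  rw [← intervalIntegral.integral_of_le (hab.trans hb), ← intervalIntegral.integral_of_le hb,
    ← intervalIntegral.integral_add_adjacent_intervals (hi a a b) (hi a b 1),
    intervalIntegral.integral_sub (hi a b 1) (hi b b 1), add_sub_assoc]

theorem profile_le_profile (hw : Continuous w) (hw0 : ∀ t ∈ Icc (0 : ℝ) 1, 0 ≤ w t)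
    (hs : 0 ≤ s) (ha : 0 ≤ a) (hab : a ≤ b) (hb : b ≤ 1) : profile w s b ≤ profile w s a := by
  rw [← sub_nonneg, profile_sub_eq hw hs hab hb]
  refine add_nonneg (intervalIntegral.integral_nonneg hab fun t ht => ?_)
    (intervalIntegral.integral_nonneg hb fun t ht => ?_)
  · have hat : a ^ 2 ≤ t ^ 2 := pow_le_pow_left₀ ha ht.1 2
    exact mul_nonneg (hw0 t ⟨ha.trans ht.1, ht.2.trans hb⟩) (rpow_nonneg (sub_nonneg.2 hat) s)
  · have hab2 : a ^ 2 ≤ b ^ 2 := pow_le_pow_left₀ ha hab 2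
    have hbt2 : b ^ 2 ≤ t ^ 2 := pow_le_pow_left₀ (ha.trans hab) ht.1 2
    refine mul_nonneg (hw0 t ⟨(ha.trans hab).trans ht.1, ht.2⟩) (sub_nonneg.2 ?_)
    exact rpow_le_rpow (sub_nonneg.2 hbt2) (by linarith) hs

theorem profile_sub_le (hw : Continuous w) (hw01 : ∀ t ∈ Icc (0 : ℝ) 1, w t ∈ Icc (0 : ℝ) 1)
    (hs : 0 ≤ s) (ha : 0 ≤ a) (hab : a ≤ b) (hb : b ≤ 1) :
    profile w s a - profile w s b ≤ 2 ^ s * (b - a) := by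
  have hi (c d e : ℝ) := (profile_integrand_continuous hw hs c).intervalIntegrable (μ := volume) d e
  have hj (c d e : ℝ) : IntervalIntegrable (fun t : ℝ => (t - c) ^ s) volume d e :=
    (Continuous.rpow_const (by fun_prop) fun _ => Or.inr hs).intervalIntegrable d e
  have near : ∫ t in a..b, w t * (t ^ 2 - a ^ 2) ^ s ≤ ∫ t in a..b, 2 ^ s * (t - a) ^ s := by
    refine intervalIntegral.integral_mono_on hab (hi _ _ _) ((hj _ _ _).const_mul _) fun t ht => ?_
    have hat : a ^ 2 ≤ t ^ 2 := pow_le_pow_left₀ ha ht.1 2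
    exact (mul_le_of_le_one_left (rpow_nonneg (sub_nonneg.2 hat) s)
      (hw01 t ⟨ha.trans ht.1, ht.2.trans hb⟩).2).trans
      (sq_sub_sq_rpow_le hs ha ⟨ht.1, ht.2.trans hb⟩)
  have far : ∫ t in b..1, w t * ((t ^ 2 - a ^ 2) ^ s - (t ^ 2 - b ^ 2) ^ s) ≤
      ∫ t in b..1, 2 ^ s * ((t - a) ^ s - (t - b) ^ s) := by
    refine intervalIntegral.integral_mono_on hb ?_ (((hj _ _ _).sub (hj _ _ _)).const_mul _)
      fun t ht => ?_
    · simpa only [mul_sub] using (hi a b 1).sub (hi b b 1)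
    have hab2 : a ^ 2 ≤ b ^ 2 := pow_le_pow_left₀ ha hab 2
    have hbt2 : b ^ 2 ≤ t ^ 2 := pow_le_pow_left₀ (ha.trans hab) ht.1 2
    refine (mul_le_of_le_one_left (sub_nonneg.2 ?_)
      (hw01 t ⟨(ha.trans hab).trans ht.1, ht.2⟩).2).trans (sq_sub_sq_rpow_sub_le hs ha hab ht)
    exact rpow_le_rpow (sub_nonneg.2 hbt2) (by linarith) hs
  calc profile w s a - profile w s b
      ≤ (∫ t in a..b, 2 ^ s * (t - a) ^ s) + ∫ t in b..1, 2 ^ s * ((t - a) ^ s - (t - b) ^ s) := by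
        rw [profile_sub_eq hw hs hab hb]
        exact add_le_add near far
    _ = 2 ^ s * ((∫ t in a..1, (t - a) ^ s) - ∫ t in b..1, (t - b) ^ s) := by
        rw [intervalIntegral.integral_const_mul, intervalIntegral.integral_const_mul,
          intervalIntegral.integral_sub (hj _ _ _) (hj _ _ _),
          ← intervalIntegral.integral_add_adjacent_intervals (hj a a b) (hj a b 1)]
        ring
    _ ≤ 2 ^ s * (b - a) :=
        mul_le_mul_of_nonneg_left (integral_rpow_sub_sub_le hs hab ha hb) (by positivity)

theorem profile_lipschitzOnWith (hw : Continuous w)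
    (hw01 : ∀ t ∈ Icc (0 : ℝ) 1, w t ∈ Icc (0 : ℝ) 1) (hs : 0 ≤ s) :
    LipschitzOnWith ((2 : ℝ≥0) ^ s) (profile w s) (Ici 0) := by
  have unit : LipschitzOnWith ((2 : ℝ≥0) ^ s) (profile w s) (Icc 0 1) := by
    refine LipschitzOnWith.of_le_add_mul _ fun a ha b hb => ?_
    rw [← sub_le_iff_le_add', NNReal.coe_rpow, NNReal.coe_ofNat]
    rcases le_total a b with hab | hba
    · rw [dist_comm, dist_eq, abs_of_nonneg (sub_nonneg.2 hab)]
      exact profile_sub_le hw hw01 hs ha.1 hab hb.2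
    · have hle := profile_le_profile hw (fun t ht => (hw01 t ht).1) hs hb.1 hba ha.2
      exact (sub_nonpos.2 hle).trans (by positivity)
  have profile_min : profile w s ∘ (min · 1) = profile w s := by
    funext c
    rcases le_total c 1 with hc | hc
    · rw [Function.comp_apply, min_eq_left hc]
    · rw [Function.comp_apply, min_eq_right hc, profile_eq_zero hc, profile_eq_zero le_rfl]
  rw [← profile_min, ← mul_one ((2 : ℝ≥0) ^ s)]
  exact unit.comp (LipschitzWith.id.min_const 1).lipschitzOnWith
    fun c hc => ⟨le_min hc zero_le_one, min_le_right c 1⟩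

theorem setIntegral_Ioc_exp_eq_profile {d : ℝ} (hd : 0 ≤ d) (y : ℝ) :
    ∫ ε in Ioc d (exp y), w (ε * exp (-y)) * (ε ^ 2 - d ^ 2) ^ s =
      exp ((2 * s + 1) * y) * profile w s (d * exp (-y)) := by
  have exp_mul_exp_neg : exp y * exp (-y) = 1 := by rw [← exp_add, add_neg_cancel, exp_zero]
  rcases le_or_gt (exp y) d with h | h
  · have : 1 ≤ d * exp (-y) := exp_mul_exp_neg ▸ mul_le_mul_of_nonneg_right h (exp_pos _).le
    rw [Ioc_eq_empty (not_lt.2 h), profile_eq_zero this, setIntegral_empty, mul_zero]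
  set c := d * exp (-y) with hc
  have hc0 : 0 ≤ c := by positivity
  have hc1 : c ≤ 1 := exp_mul_exp_neg ▸ mul_le_mul_of_nonneg_right h.le (exp_pos _).le
  have hcd : exp y * c = d := by rw [hc, mul_left_comm, exp_mul_exp_neg, mul_one]
  have rescale (t : ℝ) (ht : t ∈ Icc c 1) :
      exp y * (w (exp y * t * exp (-y)) * ((exp y * t) ^ 2 - d ^ 2) ^ s) =
        exp ((2 * s + 1) * y) * (w t * (t ^ 2 - c ^ 2) ^ s) := by
    have hct : 0 ≤ t ^ 2 - c ^ 2 := sub_nonneg.2 (pow_le_pow_left₀ hc0 ht.1 2)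
    have hexp : exp ((2 * s + 1) * y) = exp y * (exp y ^ 2) ^ s := by
      rw [← exp_nat_mul, ← exp_mul, ← exp_add]
      push_cast
      ring_nf
    rw [← hcd, mul_pow, mul_pow, ← mul_sub, mul_rpow (by positivity) hct, mul_right_comm (exp y) t,
      exp_mul_exp_neg, one_mul, hexp]
    ring
  rw [profile, ← intervalIntegral.integral_of_le h.le, ← intervalIntegral.integral_of_le hc1,
    ← intervalIntegral.integral_const_mul]
  have hsub := intervalIntegral.smul_integral_comp_mul_left (a := c) (b := 1)
    (fun ε => w (ε * exp (-y)) * (ε ^ 2 - d ^ 2) ^ s) (exp y)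
  rw [hcd, mul_one, smul_eq_mul, ← intervalIntegral.integral_const_mul] at hsub
  rw [← hsub]
  exact intervalIntegral.integral_congr fun t ht => rescale t (uIcc_of_le hc1 ▸ ht)

end Profile

theorem mul_exp_le_iff {r η S : ℝ} : r * exp η ≤ S ↔ r ≤ S * exp (-η) := by
  rw [exp_neg, ← div_eq_mul_inv, le_div_iff₀ (exp_pos η)]

/-- A matter quantity as a function `G r η` of the radius and of the value `η = y(r)`. The field
`eq_zero` records that there are no particles where the effective potential `S / r` of the shell
with `S = √L₀` exceeds the cut-off energy `eʸ`. -/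
structure IsMatterFunction (S : ℝ) (G : ℝ → ℝ → ℝ) : Prop where
  locallyLipschitzOn : LocallyLipschitzOn (Ioi 0 ×ˢ univ) (Function.uncurry G)
  nonneg : ∀ r > 0, ∀ η, 0 ≤ G r η
  eq_zero : ∀ r > 0, ∀ η, r * exp η ≤ S → G r η = 0

theorem isMatterFunction_of_eq_profile {w : ℝ → ℝ} {G : ℝ → ℝ → ℝ} {S c e β s : ℝ}
    (hw : Continuous w) (hw01 : ∀ t ∈ Icc (0 : ℝ) 1, w t ∈ Icc (0 : ℝ) 1) (hs : 0 ≤ s)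
    (hS : 0 ≤ S) (hc : 0 ≤ c)
    (hG : ∀ r > 0, ∀ η, G r η = c * r ^ e * exp (β * η) * profile w s (S / r * exp (-η))) :
    IsMatterFunction S G where
  locallyLipschitzOn := by
    have hpos {x : ℝ × ℝ} (hx : x ∈ Ioi (0 : ℝ) ×ˢ univ) : x.1 ≠ 0 := (mem_Ioi.1 hx.1).ne'
    have prefactor : LocallyLipschitzOn (Ioi 0 ×ˢ univ)
        fun x : ℝ × ℝ => c * x.1 ^ e * exp (β * x.2) := locallyLipschitzOn_of_contDiffAt
      fun x hx => ((contDiffAt_const.mul (contDiffAt_fst.rpow_const_of_ne (hpos hx))).mul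
        (by fun_prop))
    have argument : LocallyLipschitzOn (Ioi 0 ×ˢ univ)
        fun x : ℝ × ℝ => S / x.1 * exp (-x.2) := locallyLipschitzOn_of_contDiffAt
      fun x hx => (contDiffAt_const.div contDiffAt_fst (hpos hx)).mul (by fun_prop)
    have profile_lip : LocallyLipschitzOn (Ici 0) (profile w s) := fun _ _ =>
      ⟨_, Ici 0, self_mem_nhdsWithin, profile_lipschitzOnWith hw hw01 hs⟩
    have profile_argument := locallyLipschitzOn_comp profile_lip argument fun x hx =>
      mul_nonneg (div_nonneg hS (mem_Ioi.1 hx.1).le) (exp_pos _).le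
    have mul_contDiff : ContDiff ℝ 1 fun x : ℝ × ℝ => x.1 * x.2 := by fun_prop
    refine locallyLipschitzOn_congr (locallyLipschitzOn_comp
      mul_contDiff.locallyLipschitz.locallyLipschitzOn
      (locallyLipschitzOn_prodMk prefactor profile_argument) (mapsTo_univ _ _)) fun x hx => ?_
    exact hG x.1 hx.1 x.2
  nonneg r hr η := by
    rw [hG r hr]
    have := profile_nonneg (s := s) (a := S / r * exp (-η)) (fun t ht => (hw01 t ht).1)
      (by positivity)
    positivity
  eq_zero r hr η hη := by
    have : 1 ≤ S / r * exp (-η) := by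
      rw [exp_neg, ← div_eq_mul_inv, div_div, one_le_div (by positivity)]
      exact hη
    rw [hG r hr, profile_eq_zero this, mul_zero]

section Ansatz

variable {k ℓ L0 : ℝ}

theorem cConst_nonneg (ℓ : ℝ) : 0 ≤ cConst ℓ :=
  mul_nonneg (by positivity) <| setIntegral_nonneg measurableSet_Ioc fun s hs =>
    div_nonneg (rpow_nonneg hs.1.le ℓ) (sqrt_nonneg _)

theorem rho_eq_profile (hL : 0 ≤ L0) {r : ℝ} (hr : 0 < r) (y : ℝ → ℝ) :
    rho k ℓ L0 y r = cConst ℓ * r ^ (2 * ℓ) * exp ((2 * ℓ + 4) * y r) *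
      profile (fun t => (1 - t) ^ k * t ^ 2) (ℓ + 1 / 2) (√L0 / r * exp (-y r)) := by
  have integrand (ε : ℝ) :
      (1 - ε * exp (-y r)) ^ k * ε ^ 2 * (ε ^ 2 - L0 / r ^ 2) ^ (ℓ + 1 / 2) = exp (2 * y r) *
        ((1 - ε * exp (-y r)) ^ k * (ε * exp (-y r)) ^ 2 *
          (ε ^ 2 - (√L0 / r) ^ 2) ^ (ℓ + 1 / 2)) := by
    rw [div_pow, sq_sqrt hL, mul_pow, ← exp_nat_mul]
    have : exp (2 * y r) * exp ((2 : ℕ) * -y r) = 1 := by simp [← exp_add]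
    linear_combination (-(1 - ε * exp (-y r)) ^ k * ε ^ 2 * (ε ^ 2 - L0 / r ^ 2) ^ (ℓ + 1 / 2))
      * this
  rw [rho, mul_assoc _ (exp _)]
  simp_rw [integrand]
  rw [integral_const_mul, setIntegral_Ioc_exp_eq_profile (w := fun t => (1 - t) ^ k * t ^ 2)
    (by positivity), ← mul_assoc (exp _), ← exp_add]
  ring_nf

theorem pres_eq_profile (hL : 0 ≤ L0) {r : ℝ} (hr : 0 < r) (y : ℝ → ℝ) :
    pres k ℓ L0 y r = cConst ℓ / (2 * ℓ + 3) * r ^ (2 * ℓ) * exp ((2 * ℓ + 4) * y r) *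
      profile (fun t => (1 - t) ^ k) (ℓ + 3 / 2) (√L0 / r * exp (-y r)) := by
  have := setIntegral_Ioc_exp_eq_profile (w := fun t => (1 - t) ^ k) (s := ℓ + 3 / 2)
    (d := √L0 / r) (by positivity) (y r)
  rw [div_pow, sq_sqrt hL] at this
  rw [pres, this]
  ring_nf

theorem one_sub_rpow_mem_Icc (hk : 0 ≤ k) {t : ℝ} (ht : t ∈ Icc (0 : ℝ) 1) :
    (1 - t) ^ k ∈ Icc (0 : ℝ) 1 :=
  ⟨rpow_nonneg (sub_nonneg.2 ht.2) k,
    rpow_le_one (sub_nonneg.2 ht.2) (sub_le_self 1 ht.1) hk⟩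

theorem isMatterFunction_rho (hk : 0 ≤ k) (hl : -(1 / 2) ≤ ℓ) (hL : 0 ≤ L0) :
    IsMatterFunction √L0 fun r η => rho k ℓ L0 (fun _ => η) r := by
  refine isMatterFunction_of_eq_profile ?_ (fun t ht => ?_) (by linarith) (sqrt_nonneg L0)
    (cConst_nonneg ℓ) fun r hr η => rho_eq_profile hL hr fun _ => η
  · exact (Continuous.rpow_const (by fun_prop) fun _ => Or.inr hk).mul (by fun_prop)
  · have hp := one_sub_rpow_mem_Icc hk ht
    exact ⟨mul_nonneg hp.1 (sq_nonneg t),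
      mul_le_one₀ hp.2 (sq_nonneg t) (pow_le_one₀ ht.1 ht.2)⟩

theorem isMatterFunction_pres (hk : 0 ≤ k) (hl : -(1 / 2) ≤ ℓ) (hL : 0 ≤ L0) :
    IsMatterFunction √L0 fun r η => pres k ℓ L0 (fun _ => η) r := by
  refine isMatterFunction_of_eq_profile ?_ (fun t ht => one_sub_rpow_mem_Icc hk ht)
    (by linarith) (sqrt_nonneg L0) (div_nonneg (cConst_nonneg ℓ) (by linarith))
    fun r hr η => pres_eq_profile hL hr fun _ => η
  exact Continuous.rpow_const (by fun_prop) fun _ => Or.inr hk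

end Ansatz

section ShellSystem

/-- The structure equations `y' = -(1 - 2m/r)⁻¹ (4πrP + m/r²)`, `m' = 4πr²G` as a time-dependent
vector field on pairs `x = (y, m)`. -/
noncomputable def shellField (G P : ℝ → ℝ → ℝ) (r : ℝ) (x : ℝ × ℝ) : ℝ × ℝ :=
  (-(1 - 2 * x.2 / r)⁻¹ * (4 * π * r * P r x.1 + x.2 / r ^ 2), 4 * π * (r ^ 2 * G r x.1))

/-- The set of points `(r, y, m)` at which the metric coefficient `1 - 2m/r` is positive. -/
def shellDomain : Set (ℝ × ℝ × ℝ) :=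
  {q | 0 < q.1 ∧ 2 * q.2.2 / q.1 < 1}

/-- Restricts `x = (y, m)` to the rectangle `lo ≤ y ≤ hi`, `0 ≤ 2m/r ≤ 1 - δ`. -/
noncomputable def shellTruncation (lo hi δ r : ℝ) (x : ℝ × ℝ) : ℝ × ℝ :=
  (max lo (min hi x.1), max 0 (min ((1 - δ) * r / 2) x.2))

variable {G P : ℝ → ℝ → ℝ} {S a T lo hi δ : ℝ}

theorem shellField_locallyLipschitzOn (hG : IsMatterFunction S G) (hP : IsMatterFunction S P) :
    LocallyLipschitzOn shellDomain (Function.uncurry (shellField G P)) := by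
  have radius_value : LocallyLipschitzOn shellDomain fun q : ℝ × ℝ × ℝ => (q.1, q.2.1) :=
    locallyLipschitzOn_of_contDiffAt fun q _ => by fun_prop
  have maps : MapsTo (fun q : ℝ × ℝ × ℝ => (q.1, q.2.1)) shellDomain (Ioi 0 ×ˢ univ) :=
    fun q hq => ⟨hq.1, mem_univ _⟩
  have matter := locallyLipschitzOn_prodMk
    (locallyLipschitzOn_comp hG.locallyLipschitzOn radius_value maps)
    (locallyLipschitzOn_comp hP.locallyLipschitzOn radius_value maps)
  have identity : LocallyLipschitzOn shellDomain fun q : ℝ × ℝ × ℝ => q :=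
    locallyLipschitzOn_of_contDiffAt fun q _ => by fun_prop
  have field : LocallyLipschitzOn (shellDomain ×ˢ univ) fun z : (ℝ × ℝ × ℝ) × ℝ × ℝ =>
      (-(1 - 2 * z.1.2.2 / z.1.1)⁻¹ * (4 * π * z.1.1 * z.2.2 + z.1.2.2 / z.1.1 ^ 2),
        4 * π * (z.1.1 ^ 2 * z.2.1)) := by
    refine locallyLipschitzOn_of_contDiffAt fun z hz => ?_
    have hr : z.1.1 ≠ 0 := hz.1.1.ne'
    have hr2 : z.1.1 ^ 2 ≠ 0 := pow_ne_zero 2 hr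
    have hu : 1 - 2 * z.1.2.2 / z.1.1 ≠ 0 := (sub_pos.2 hz.1.2).ne'
    fun_prop (disch := assumption)
  exact locallyLipschitzOn_congr (locallyLipschitzOn_comp field
    (locallyLipschitzOn_prodMk identity matter) fun q hq => ⟨hq, mem_univ _⟩) fun q _ => rfl

theorem shellTruncation_locallyLipschitz (lo hi δ : ℝ) :
    LocallyLipschitz fun q : ℝ × ℝ × ℝ => (q.1, shellTruncation lo hi δ q.1 q.2) := by
  have linear {f : ℝ × ℝ × ℝ → ℝ} (hf : ContDiff ℝ 1 f) : LocallyLipschitz f := hf.locallyLipschitz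
  exact (linear (by fun_prop)).prodMk
    ((((linear (f := fun q => q.2.1) (by fun_prop)).const_min hi).const_max lo).prodMk
      (((linear (f := fun q => (1 - δ) * q.1 / 2) (by fun_prop)).min
        (linear (f := fun q => q.2.2) (by fun_prop))).const_max 0))

theorem two_mul_shellTruncation_snd_le (hδ : δ ≤ 1) {r : ℝ} (hr : 0 ≤ r) (x : ℝ × ℝ) :
    2 * (shellTruncation lo hi δ r x).2 ≤ (1 - δ) * r := by
  have hδr : 0 ≤ (1 - δ) * r := mul_nonneg (sub_nonneg.2 hδ) hr
  have : (shellTruncation lo hi δ r x).2 ≤ (1 - δ) * r / 2 :=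
    max_le (by linarith) (min_le_left _ _)
  linarith

theorem mem_shellDomain_of_two_mul_le (hδ : 0 < δ) {r : ℝ} (hr : 0 < r) {x : ℝ × ℝ}
    (hx : 2 * x.2 ≤ (1 - δ) * r) : (r, x) ∈ shellDomain :=
  ⟨hr, (div_lt_one hr).2 (by nlinarith)⟩

theorem exists_bound_shellField_shellTruncation (hG : IsMatterFunction S G)
    (hP : IsMatterFunction S P) (ha : 0 < a) (hlohi : lo ≤ hi) (hδ : δ ∈ Ioc (0 : ℝ) 1) :
    ∃ L : ℝ≥0, ∀ r ∈ Icc a T, ∀ x, ‖shellField G P r (shellTruncation lo hi δ r x)‖ ≤ L := by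
  set K : Set (ℝ × ℝ × ℝ) := (Icc a T ×ˢ Icc lo hi ×ˢ Icc 0 T) ∩ {q | 2 * q.2.2 ≤ (1 - δ) * q.1}
  have hK : IsCompact K := (isCompact_Icc.prod (isCompact_Icc.prod isCompact_Icc)).inter_right
    (isClosed_le (by fun_prop) (by fun_prop))
  have hKΩ : K ⊆ shellDomain := fun q hq =>
    mem_shellDomain_of_two_mul_le hδ.1 (ha.trans_le hq.1.1.1) hq.2
  obtain ⟨L, hL⟩ := hK.exists_bound_of_continuousOn
    ((shellField_locallyLipschitzOn hG hP).mono hKΩ).continuousOn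
  refine ⟨L.toNNReal, fun r hr x => ?_⟩
  have hr0 : 0 < r := ha.trans_le hr.1
  have hm := two_mul_shellTruncation_snd_le (lo := lo) (hi := hi) hδ.2 hr0.le x
  have hmT : (shellTruncation lo hi δ r x).2 ≤ T := by nlinarith [hδ.1, hr.2]
  exact (hL (r, shellTruncation lo hi δ r x) ⟨⟨hr, ⟨le_max_left _ _,
    max_le hlohi (min_le_left _ _)⟩, le_max_left _ _, hmT⟩, hm⟩).trans (le_coe_toNNReal L)

theorem exists_truncated_integralCurve (hG : IsMatterFunction S G) (hP : IsMatterFunction S P)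
    (ha : 0 < a) (haT : a ≤ T) (hlohi : lo ≤ hi) (hδ : δ ∈ Ioc (0 : ℝ) 1) (x₀ : ℝ × ℝ) :
    ∃ c : ℝ → ℝ × ℝ, c a = x₀ ∧
      IsIntegralCurveOn c (fun r x => shellField G P r (shellTruncation lo hi δ r x))
        (Icc a T) := by
  obtain ⟨L, hL⟩ := exists_bound_shellField_shellTruncation (T := T) hG hP ha hlohi hδ
  refine exists_isIntegralCurveOn_Icc_of_bounded haT ?_ hL x₀
  exact locallyLipschitzOn_congr (locallyLipschitzOn_comp (shellField_locallyLipschitzOn hG hP)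
    (shellTruncation_locallyLipschitz lo hi δ).locallyLipschitzOn
    fun q hq => mem_shellDomain_of_two_mul_le hδ.1 (ha.trans_le hq.1.1)
      (two_mul_shellTruncation_snd_le hδ.2 (ha.trans_le hq.1.1).le q.2)) fun q _ => rfl

/- At a contact point `2m/r ≥ 1/2`, so the term `m/r²` of `y'` makes the barrier decrease faster
than the term `8πrg` makes `1 - 2m/r` decrease. -/
theorem half_exp_le_one_sub_two_mul_div {y m y' g : ℝ → ℝ} {A : ℝ} (ha : 0 < a)
    (hy : ∀ r ∈ Icc a T, HasDerivWithinAt y (y' r) (Icc a T) r)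
    (hm : ∀ r ∈ Icc a T, HasDerivWithinAt m (4 * π * (r ^ 2 * g r)) (Icc a T) r)
    (hma : m a = 0) (hya : ∀ r ∈ Icc a T, y r ≤ y a) (hg : ∀ r ∈ Icc a T, 0 ≤ g r)
    (hgA : ∀ r ∈ Icc a T, 32 * π * (r ^ 2 * g r) ≤ A * exp (y r))
    (hy' : ∀ r ∈ Icc a T, 1 - 2 * m r / r = 1 / 2 * exp (A * (exp (y r) - exp (y a))) →
      y' r ≤ -(1 - 2 * m r / r)⁻¹ * (m r / r ^ 2)) :
    ∀ r ∈ Icc a T, 1 / 2 * exp (A * (exp (y r) - exp (y a))) ≤ 1 - 2 * m r / r := by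
  have barrier_deriv (r : ℝ) (hr : r ∈ Icc a T) :=
    ((((hy r hr).exp.sub_const (exp (y a))).const_mul A).exp).const_mul (1 / 2)
  have coeff_deriv (r : ℝ) (hr : r ∈ Icc a T) : HasDerivWithinAt (fun r => 1 - 2 * m r / r)
      (2 * (m r / r ^ 2) - 8 * π * r * g r) (Icc a T) r := by
    have hr0 : r ≠ 0 := (ha.trans_le hr.1).ne'
    refine ((((hm r hr).const_mul 2).div (hasDerivWithinAt_id r _) hr0).const_sub 1).congr_deriv ?_
    rw [id_eq]
    field_simp
    ring
  refine image_le_of_deriv_right_lt_deriv_boundary'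
    (fun r hr => (barrier_deriv r hr).continuousWithinAt)
    (fun r hr => hasDerivWithinAt_Ici_of_Icc (barrier_deriv r (Ico_subset_Icc_self hr)) hr)
    (by norm_num [hma]) (fun r hr => (coeff_deriv r hr).continuousWithinAt)
    (fun r hr => hasDerivWithinAt_Ici_of_Icc (coeff_deriv r (Ico_subset_Icc_self hr)) hr)
    fun r hrT contact => ?_
  have hr : r ∈ Icc a T := Ico_subset_Icc_self hrT
  have hr0 : 0 < r := ha.trans_le hr.1
  have hrg : 0 ≤ 32 * π * (r ^ 2 * g r) := mul_nonneg (by positivity)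
    (mul_nonneg (sq_nonneg r) (hg r hr))
  have hA : 0 ≤ A := nonneg_of_mul_nonneg_left (hrg.trans (hgA r hr)) (exp_pos _)
  have barrier_le_one : exp (A * (exp (y r) - exp (y a))) ≤ 1 :=
    exp_le_one_iff.2 (mul_nonpos_of_nonneg_of_nonpos hA (sub_nonpos.2 (exp_le_exp.2 (hya r hr))))
  have hmass : r / 4 ≤ m r := by
    have : 1 / 2 ≤ 2 * m r / r := by linarith
    rw [le_div_iff₀ hr0] at this
    linarith
  have hmr : 0 < m r / r ^ 2 := div_pos (by linarith) (by positivity)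
  have coeff_pos : 0 < 1 - 2 * m r / r := contact ▸ by positivity
  calc 1 / 2 * (exp (A * (exp (y r) - exp (y a))) * (A * (exp (y r) * y' r)))
      = A * exp (y r) * ((1 - 2 * m r / r) * y' r) := by rw [← contact]; ring
    _ ≤ A * exp (y r) * -(m r / r ^ 2) := by
        gcongr
        refine (mul_le_mul_of_nonneg_left (hy' r hr contact.symm) coeff_pos.le).trans_eq ?_
        rw [← mul_assoc, mul_neg, mul_inv_cancel₀ coeff_pos.ne', neg_one_mul]
    _ ≤ 32 * π * (r ^ 2 * g r) * -(m r / r ^ 2) :=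
        mul_le_mul_of_nonpos_right (hgA r hr) (neg_nonpos.2 hmr.le)
    _ = -(32 * π * g r * m r) := by field_simp
    _ ≤ -(32 * π * g r * (r / 4)) :=
        neg_le_neg (mul_le_mul_of_nonneg_left hmass (mul_nonneg (by positivity) (hg r hr)))
    _ < 2 * (m r / r ^ 2) - 8 * π * r * g r := by linarith

theorem IsMatterFunction.apply_clamp (hG : IsMatterFunction S G) {r η : ℝ} (hr : 0 < r)
    (hlo : r * exp lo ≤ S) (hη : η ≤ hi) : G r (max lo (min hi η)) = G r η := by
  rw [min_eq_right hη]
  rcases le_total lo η with h | h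
  · rw [max_eq_right h]
  · rw [max_eq_left h, hG.eq_zero r hr lo hlo,
      hG.eq_zero r hr η ((mul_le_mul_of_nonneg_left (exp_le_exp.2 h) hr.le).trans hlo)]

theorem exists_sq_mul_matter_le_exp (hG : IsMatterFunction S G) (hS : 0 < S) (ha : 0 < a)
    (haT : a ≤ T) (hi : ℝ) :
    ∃ A ≥ 0, ∀ r ∈ Icc a T, ∀ η ≤ hi, 32 * π * (r ^ 2 * G r η) ≤ A * exp η := by
  have hT : 0 < T := ha.trans_le haT
  set lo := log (S / T)
  have hlo : exp lo = S / T := exp_log (div_pos hS hT)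
  have hcont : ContinuousOn (fun q : ℝ × ℝ => 32 * π * (q.1 ^ 2 * G q.1 q.2))
      (Icc a T ×ˢ Icc lo hi) :=
    continuousOn_const.mul ((continuous_fst.pow 2).continuousOn.mul
      (hG.locallyLipschitzOn.continuousOn.mono fun q hq => ⟨ha.trans_le hq.1.1, mem_univ _⟩))
  obtain ⟨B, hB⟩ := (isCompact_Icc.prod isCompact_Icc).exists_bound_of_continuousOn hcont
  refine ⟨|B| / exp lo, by positivity, fun r hr η hη => ?_⟩
  have hr0 : 0 < r := ha.trans_le hr.1
  rcases le_total η lo with h | h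
  · have : r * exp η ≤ S := by
      calc r * exp η ≤ T * exp lo := by gcongr; exact hr.2
        _ = S := by rw [hlo]; field_simp
    rw [hG.eq_zero r hr0 η this, mul_zero, mul_zero]
    positivity
  · calc 32 * π * (r ^ 2 * G r η) ≤ |B| :=
          (le_abs_self _).trans ((hB (r, η) ⟨hr, h, hη⟩).trans (le_abs_self B))
      _ = |B| / exp lo * exp lo := by field_simp
      _ ≤ |B| / exp lo * exp η := by gcongr

theorem shellField_shellTruncation_eq (hG : IsMatterFunction S G) (hP : IsMatterFunction S P)
    {r : ℝ} {x : ℝ × ℝ} (hr : 0 < r) (hlo : r * exp lo ≤ S) (hhi : x.1 ≤ hi) (hm : 0 ≤ x.2)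
    (hmδ : 2 * x.2 / r ≤ 1 - δ) :
    shellField G P r (shellTruncation lo hi δ r x) = shellField G P r x := by
  have : (shellTruncation lo hi δ r x).2 = x.2 := by
    rw [div_le_iff₀ hr] at hmδ
    simp only [shellTruncation]
    rw [min_eq_right (by linarith), max_eq_right hm]
  simp only [shellField, this]
  simp only [shellTruncation, hG.apply_clamp hr hlo hhi,
    hP.apply_clamp hr hlo hhi]

theorem shellField_fst_nonpos (hP : IsMatterFunction S P) {r : ℝ} {x : ℝ × ℝ}
    (hx : (r, x) ∈ shellDomain) (hm : 0 ≤ x.2) : (shellField G P r x).1 ≤ 0 := by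
  have hr : 0 < r := hx.1
  have hcoeff : 0 < 1 - 2 * x.2 / r := sub_pos.2 hx.2
  have := hP.nonneg r hr x.1
  exact mul_nonpos_of_nonpos_of_nonneg (neg_nonpos.2 (by positivity)) (by positivity)

theorem shellField_snd_nonneg (hG : IsMatterFunction S G) {r : ℝ} (hr : 0 < r) (x : ℝ × ℝ) :
    0 ≤ (shellField G P r x).2 := by
  have := hG.nonneg r hr x.1
  simp only [shellField]
  positivity

theorem fst_le_and_le_snd_of_isIntegralCurveOn_truncation (hG : IsMatterFunction S G)
    (hP : IsMatterFunction S P) {c : ℝ → ℝ × ℝ} (ha : 0 < a) (hδ : δ ∈ Ioc (0 : ℝ) 1)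
    (hc : IsIntegralCurveOn c (fun r x => shellField G P r (shellTruncation lo hi δ r x))
      (Icc a T)) {r : ℝ} (hr : r ∈ Icc a T) :
    (c r).1 ≤ (c a).1 ∧ (c a).2 ≤ (c r).2 := by
  have pos (t : ℝ) (ht : t ∈ Icc a T) : 0 < t := ha.trans_le ht.1
  have domain (t : ℝ) (ht : t ∈ Icc a T) : (t, shellTruncation lo hi δ t (c t)) ∈ shellDomain :=
    mem_shellDomain_of_two_mul_le hδ.1 (pos t ht)
      (two_mul_shellTruncation_snd_le hδ.2 (pos t ht).le _)
  have ha_mem : a ∈ Icc a T := ⟨le_rfl, hr.1.trans hr.2⟩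
  exact ⟨antitoneOn_fst_of_isIntegralCurveOn (convex_Icc a T) hc
      (fun t ht => shellField_fst_nonpos hP (domain t ht) (le_max_left _ _)) ha_mem hr hr.1,
    monotoneOn_snd_of_isIntegralCurveOn (convex_Icc a T) hc
      (fun t ht => shellField_snd_nonneg hG (pos t ht) _) ha_mem hr hr.1⟩

theorem le_one_sub_of_isIntegralCurveOn_truncation (hG : IsMatterFunction S G)
    (hP : IsMatterFunction S P) {A : ℝ} {c : ℝ → ℝ × ℝ} (ha : 0 < a)
    (hlo : T * exp lo ≤ S) (hA : 0 ≤ A)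
    (hGA : ∀ r ∈ Icc a T, ∀ η ≤ hi, 32 * π * (r ^ 2 * G r η) ≤ A * exp η)
    (hδ : δ = 1 / 2 * exp (-(A * exp hi))) (hca : c a = (hi, 0))
    (hc : IsIntegralCurveOn c (fun r x => shellField G P r (shellTruncation lo hi δ r x))
      (Icc a T))
    (hy : ∀ r ∈ Icc a T, (c r).1 ≤ hi) (hm : ∀ r ∈ Icc a T, 0 ≤ (c r).2) :
    ∀ r ∈ Icc a T, δ ≤ 1 - 2 * (c r).2 / r := by
  have radius_pos (r : ℝ) (hr : r ∈ Icc a T) : 0 < r := ha.trans_le hr.1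
  have radius_lo (r : ℝ) (hr : r ∈ Icc a T) : r * exp lo ≤ S :=
    (mul_le_mul_of_nonneg_right hr.2 (exp_pos lo).le).trans hlo
  have le_barrier (η : ℝ) : δ ≤ 1 / 2 * exp (A * (exp η - exp (c a).1)) := by
    rw [hδ, hca]
    gcongr
    nlinarith [exp_pos η]
  have barrier := half_exp_le_one_sub_two_mul_div (y := fun r => (c r).1) (m := fun r => (c r).2)
    (g := fun r => G r (c r).1) ha
    (fun r hr => hasDerivWithinAt_fst (hc r hr))
    (fun r hr => (hasDerivWithinAt_snd (hc r hr)).congr_deriv ?_)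
    (by rw [hca]) (by simpa only [hca] using hy)
    (fun r hr => hG.nonneg r (radius_pos r hr) _) (fun r hr => hGA r hr _ (hy r hr)) ?_
  · exact fun r hr => (le_barrier _).trans (barrier r hr)
  · simp only [shellField, shellTruncation,
      hG.apply_clamp (radius_pos r hr) (radius_lo r hr) (hy r hr)]
  · intro r hr contact
    have hmδ : 2 * (c r).2 / r ≤ 1 - δ := by linarith [le_barrier (c r).1]
    have hδ0 : 0 < δ := hδ ▸ by positivity
    have hr0 := radius_pos r hr
    beta_reduce
    rw [shellField_shellTruncation_eq hG hP hr0 (radius_lo r hr) (hy r hr) (hm r hr) hmδ]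
    have := hP.nonneg r hr0 (c r).1
    have hcoeff : 0 < 1 - 2 * (c r).2 / r := by linarith
    refine mul_le_mul_of_nonpos_left ?_ (neg_nonpos.2 (inv_pos.2 hcoeff).le)
    exact le_add_of_nonneg_left (by positivity)

theorem exists_shell_integralCurve_Icc (hG : IsMatterFunction S G) (hP : IsMatterFunction S P)
    (hS : 0 < S) (y0 : ℝ) (haT : S * exp (-y0) ≤ T) :
    ∃ c : ℝ → ℝ × ℝ, c (S * exp (-y0)) = (y0, 0) ∧
      IsIntegralCurveOn c (shellField G P) (Icc (S * exp (-y0)) T) ∧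
      ∀ r ∈ Icc (S * exp (-y0)) T, (r, c r) ∈ shellDomain := by
  set a := S * exp (-y0)
  have ha : 0 < a := by positivity
  have hT : 0 < T := ha.trans_le haT
  set lo := log (S / T)
  have hlo : exp lo = S / T := exp_log (div_pos hS hT)
  have hTlo : T * exp lo = S := by rw [hlo]; field_simp
  have hlo0 : lo ≤ y0 := by
    rw [← exp_le_exp, hlo, div_le_comm₀ hT (exp_pos y0), div_eq_mul_inv, ← exp_neg]
    exact haT
  obtain ⟨A, hA, hGA⟩ := exists_sq_mul_matter_le_exp hG hS ha haT y0
  set δ := 1 / 2 * exp (-(A * exp y0)) with hδ_def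
  have hδ : δ ∈ Ioc (0 : ℝ) 1 := by
    refine ⟨by positivity, ?_⟩
    have : exp (-(A * exp y0)) ≤ 1 := exp_le_one_iff.2 (neg_nonpos.2 (by positivity))
    linarith
  obtain ⟨c, hca, hc⟩ := exists_truncated_integralCurve hG hP ha haT hlo0 hδ (y0, 0)
  have pos (r : ℝ) (hr : r ∈ Icc a T) : 0 < r := ha.trans_le hr.1
  have bounds (r : ℝ) (hr : r ∈ Icc a T) : (c r).1 ≤ y0 ∧ 0 ≤ (c r).2 := by
    simpa only [hca] using fst_le_and_le_snd_of_isIntegralCurveOn_truncation hG hP ha hδ hc hr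
  have coeff := le_one_sub_of_isIntegralCurveOn_truncation hG hP ha hTlo.le hA hGA hδ_def hca hc
    (fun r hr => (bounds r hr).1) fun r hr => (bounds r hr).2
  refine ⟨c, hca, fun r hr => (hc r hr).congr_deriv ?_, fun r hr => ⟨pos r hr, ?_⟩⟩
  · exact shellField_shellTruncation_eq hG hP (pos r hr)
      ((mul_le_mul_of_nonneg_right hr.2 (exp_pos lo).le).trans_eq hTlo)
      (bounds r hr).1 (bounds r hr).2 (by linarith [coeff r hr])
  · linarith [coeff r hr, hδ.1]

theorem shellField_eq_zero (hG : IsMatterFunction S G) (hP : IsMatterFunction S P) {r η : ℝ}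
    (hr : 0 < r) (hη : r * exp η ≤ S) : shellField G P r (η, 0) = 0 := by
  simp [shellField, hG.eq_zero r hr η hη, hP.eq_zero r hr η hη]

theorem exists_shell_integralCurve_Ioi (hG : IsMatterFunction S G) (hP : IsMatterFunction S P)
    (hS : 0 < S) (y0 : ℝ) :
    ∃ c : ℝ → ℝ × ℝ, (∀ r ≤ S * exp (-y0), c r = (y0, 0)) ∧ ContDiff ℝ 1 c ∧
      ∀ r > 0, (r, c r) ∈ shellDomain ∧ HasDerivAt c (shellField G P r (c r)) r := by
  set a := S * exp (-y0)
  have ha : 0 < a := by positivity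
  have field_zero {r : ℝ} (hr : 0 < r) (hra : r ≤ a) : shellField G P r (y0, 0) = 0 :=
    shellField_eq_zero hG hP hr (mul_exp_le_iff.2 hra)
  have hv := shellField_locallyLipschitzOn hG hP
  obtain ⟨c, hca, hc, hcΩ⟩ := exists_isIntegralCurveOn_Ici hv fun T hT =>
    exists_shell_integralCurve_Icc hG hP hS y0 hT.le
  have deriv_c (r : ℝ) : HasDerivAt (fun r => c (max a r))
      (shellField G P (max a r) (c (max a r))) r :=
    hasDerivAt_comp_max hc (by rw [hca, field_zero ha le_rfl]) r
  have inside {r : ℝ} (hr : r ≤ a) : c (max a r) = (y0, 0) := by rw [max_eq_left hr, hca]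
  refine ⟨fun r => c (max a r), fun r hr => inside hr, ?_, fun r hr => ?_⟩
  · refine contDiff_one_iff_deriv.2 ⟨fun r => (deriv_c r).differentiableAt, ?_⟩
    have hmax : Continuous fun r => max a r := continuous_const.max continuous_id
    rw [funext fun r => (deriv_c r).deriv]
    exact (hv.continuousOn.comp (continuousOn_id.prodMk hc.continuousOn) hcΩ).comp_continuous hmax
      fun r => le_max_left a r
  · beta_reduce
    rcases le_total r a with h | h
    · refine ⟨by simp [inside h, shellDomain, hr], (deriv_c r).congr_deriv ?_⟩
      rw [inside h, field_zero hr h, max_eq_left h, field_zero ha le_rfl]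
    · have deriv_c_r := deriv_c r
      rw [max_eq_right h] at deriv_c_r ⊢
      exact ⟨hcΩ r h, deriv_c_r⟩

end ShellSystem

section Mass

theorem hasDerivAt_setIntegral_Ioc {f : ℝ → ℝ} {a r : ℝ} (ha : 0 < a) (hf : ContinuousOn f (Ioi 0))
    (hfa : ∀ s ∈ Ioc 0 a, f s = 0) (hr : 0 < r) :
    HasDerivAt (fun r => ∫ s in Ioc 0 r, f s) (f r) r := by
  have hcont : Continuous fun s => f (max a s) :=
    hf.comp_continuous (continuous_const.max continuous_id) fun s => ha.trans_le (le_max_left a s)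
  have heq {s : ℝ} (hs : 0 < s) : f (max a s) = f s := by
    rcases le_total s a with h | h
    · rw [max_eq_left h, hfa a ⟨ha, le_rfl⟩, hfa s ⟨hs, h⟩]
    · rw [max_eq_right h]
  rw [← heq hr]
  refine (hcont.integral_hasStrictDerivAt 0 r).hasDerivAt.congr_of_eventuallyEq ?_
  filter_upwards [Ioi_mem_nhds hr] with t ht
  rw [intervalIntegral.integral_of_le (mem_Ioi.1 ht).le]
  exact setIntegral_congr_fun measurableSet_Ioc fun s hs => (heq hs.1).symm

/-- The mass `4π ∫₀ʳ s² G(s, y(s)) ds` generated by the energy density `G`; for the ansatz density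
it is the Hawking mass. -/
noncomputable def matterMass (G : ℝ → ℝ → ℝ) (y : ℝ → ℝ) (r : ℝ) : ℝ :=
  4 * π * ∫ s in Ioc 0 r, s ^ 2 * G s (y s)

variable {G : ℝ → ℝ → ℝ} {y : ℝ → ℝ} {S a r : ℝ}

theorem matterMass_nonneg (hG : IsMatterFunction S G) (y : ℝ → ℝ) (r : ℝ) :
    0 ≤ matterMass G y r :=
  mul_nonneg (by positivity) (setIntegral_nonneg measurableSet_Ioc fun s hs =>
    mul_nonneg (sq_nonneg s) (hG.nonneg s hs.1 (y s)))

theorem matterMass_eq_zero (hG : IsMatterFunction S G)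
    (hy : ∀ s ∈ Ioc 0 r, s * exp (y s) ≤ S) : matterMass G y r = 0 := by
  rw [matterMass, setIntegral_eq_zero_of_forall_eq_zero fun s hs => ?_, mul_zero]
  rw [hG.eq_zero s hs.1 (y s) (hy s hs), mul_zero]

theorem hasDerivAt_matterMass (hG : IsMatterFunction S G) (ha : 0 < a)
    (hy : ContinuousOn y (Ioi 0)) (hya : ∀ s ∈ Ioc 0 a, s * exp (y s) ≤ S) (hr : 0 < r) :
    HasDerivAt (matterMass G y) (4 * π * (r ^ 2 * G r (y r))) r := by
  refine (hasDerivAt_setIntegral_Ioc ha ?_ (fun s hs => ?_) hr).const_mul (4 * π)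
  · exact (continuous_id.pow 2).continuousOn.mul (hG.locallyLipschitzOn.continuousOn.comp
      (continuousOn_id.prodMk hy) fun s hs => ⟨hs, mem_univ _⟩)
  · rw [hG.eq_zero s hs.1 (y s) (hya s hs), mul_zero]

end Mass

section ShellSolution

/-- The quasi shell equations for general matter functions: energy density `G` and pressure `P`. -/
def IsShellSolution (G P : ℝ → ℝ → ℝ) (y : ℝ → ℝ) : Prop :=
  ∀ r > 0, (r, y r, matterMass G y r) ∈ shellDomain ∧
    HasDerivAt y (shellField G P r (y r, matterMass G y r)).1 r

namespace IsShellSolution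

variable {G P : ℝ → ℝ → ℝ} {y z : ℝ → ℝ} {S r : ℝ}

theorem antitoneOn (hG : IsMatterFunction S G) (hP : IsMatterFunction S P)
    (hy : IsShellSolution G P y) (hy0 : ContinuousOn y (Ici 0)) : AntitoneOn y (Ici 0) := by
  have interior_pos {r : ℝ} (hr : r ∈ interior (Ici (0 : ℝ))) : 0 < r := by rwa [interior_Ici] at hr
  exact antitoneOn_of_hasDerivWithinAt_nonpos (convex_Ici 0) hy0
    (fun r hr => (hy r (interior_pos hr)).2.hasDerivWithinAt) fun r hr =>
      shellField_fst_nonpos hP (hy r (interior_pos hr)).1 (matterMass_nonneg hG y r)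

theorem mul_exp_le (hG : IsMatterFunction S G) (hP : IsMatterFunction S P)
    (hy : IsShellSolution G P y) (hy0 : ContinuousOn y (Ici 0)) (hr : r ∈ Ioc 0 (S * exp (-y 0))) :
    r * exp (y r) ≤ S :=
  (mul_le_mul_of_nonneg_left (exp_le_exp.2 (hy.antitoneOn hG hP hy0 self_mem_Ici hr.1.le hr.1.le))
    hr.1.le).trans (mul_exp_le_iff.2 hr.2)

theorem matterMass_eq_zero (hG : IsMatterFunction S G) (hP : IsMatterFunction S P)
    (hy : IsShellSolution G P y) (hy0 : ContinuousOn y (Ici 0)) (hr : r ≤ S * exp (-y 0)) :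
    matterMass G y r = 0 :=
  _root_.matterMass_eq_zero hG fun _ hs => hy.mul_exp_le hG hP hy0 ⟨hs.1, hs.2.trans hr⟩

theorem apply_eq (hG : IsMatterFunction S G) (hP : IsMatterFunction S P)
    (hy : IsShellSolution G P y) (hy0 : ContinuousOn y (Ici 0)) (hr : r ∈ Icc 0 (S * exp (-y 0))) :
    y r = y 0 := by
  have subset_Ici : Icc 0 (S * exp (-y 0)) ⊆ Ici 0 := Icc_subset_Ici_self
  have zero_mem : 0 ∈ Icc 0 (S * exp (-y 0)) := ⟨le_rfl, hr.1.trans hr.2⟩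
  have monotone : MonotoneOn y (Icc 0 (S * exp (-y 0))) := by
    refine monotoneOn_of_hasDerivWithinAt_nonneg (f' := 0) (convex_Icc 0 _) (hy0.mono subset_Ici)
      (fun t ht => ?_) fun _ _ => le_rfl
    rw [interior_Icc] at ht
    refine (hy t ht.1).2.hasDerivWithinAt.congr_deriv ?_
    rw [hy.matterMass_eq_zero hG hP hy0 ht.2.le,
      shellField_eq_zero hG hP ht.1 (hy.mul_exp_le hG hP hy0 ⟨ht.1, ht.2.le⟩)]
    rfl
  exact (hy.antitoneOn hG hP hy0 self_mem_Ici (subset_Ici hr) hr.1).antisymm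
    (monotone zero_mem hr hr.1)

theorem isIntegralCurveOn (hG : IsMatterFunction S G) (hP : IsMatterFunction S P) (hS : 0 < S)
    (hy : IsShellSolution G P y) (hy0 : ContinuousOn y (Ici 0)) :
    IsIntegralCurveOn (fun r => (y r, matterMass G y r)) (shellField G P) (Ioi 0) := fun r hr =>
  ((hy r hr).2.prodMk (hasDerivAt_matterMass hG (by positivity) (hy0.mono Ioi_subset_Ici_self)
    (fun _ hs => hy.mul_exp_le hG hP hy0 hs) hr)).hasDerivWithinAt

theorem eqOn (hG : IsMatterFunction S G) (hP : IsMatterFunction S P) (hS : 0 < S)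
    (hy : IsShellSolution G P y) (hy0 : ContinuousOn y (Ici 0))
    (hz : IsShellSolution G P z) (hz0 : ContinuousOn z (Ici 0)) (hyz : y 0 = z 0) :
    EqOn y z (Ici 0) := by
  set a := S * exp (-y 0)
  have haz : a = S * exp (-z 0) := by rw [← hyz]
  have ha : 0 < a := by positivity
  have inside {r : ℝ} (hr : r ∈ Icc 0 a) : y r = z r :=
    (hy.apply_eq hG hP hy0 hr).trans (hyz.trans (hz.apply_eq hG hP hz0 (haz ▸ hr)).symm)
  intro r hr
  rcases le_total r a with h | h
  · exact inside ⟨hr, h⟩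
  have subset_Ioi : Icc a r ⊆ Ioi 0 := fun t ht => ha.trans_le ht.1
  have initial : (y a, matterMass G y a) = (z a, matterMass G z a) := by
    rw [inside ⟨ha.le, le_rfl⟩, hy.matterMass_eq_zero hG hP hy0 le_rfl,
      hz.matterMass_eq_zero hG hP hz0 haz.le]
  exact congrArg Prod.fst (eqOn_of_isIntegralCurveOn_Icc (shellField_locallyLipschitzOn hG hP)
    ((hy.isIntegralCurveOn hG hP hS hy0).mono subset_Ioi) (fun t ht => (hy t (subset_Ioi ht)).1)
    ((hz.isIntegralCurveOn hG hP hS hz0).mono subset_Ioi) (fun t ht => (hz t (subset_Ioi ht)).1)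
    initial ⟨h, le_rfl⟩)

end IsShellSolution

variable {G P : ℝ → ℝ → ℝ} {S : ℝ}

theorem exists_isShellSolution (hG : IsMatterFunction S G) (hP : IsMatterFunction S P)
    (hS : 0 < S) (y0 : ℝ) :
    ∃ y : ℝ → ℝ, y 0 = y0 ∧ ContDiff ℝ 1 y ∧ IsShellSolution G P y := by
  obtain ⟨c, hca, hc_smooth, hc⟩ := exists_shell_integralCurve_Ioi hG hP hS y0
  set a := S * exp (-y0)
  have ha : 0 < a := by positivity
  have y_smooth : ContDiff ℝ 1 fun r => (c r).1 := hc_smooth.fst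
  have inside {s : ℝ} (hs : s ∈ Ioc 0 a) : s * exp (c s).1 ≤ S := by
    rw [hca s hs.2]
    exact mul_exp_le_iff.2 hs.2
  have mass_deriv {r : ℝ} (hr : 0 < r) := hasDerivAt_matterMass hG ha
    y_smooth.continuous.continuousOn (fun _ hs => inside hs) hr
  have snd_deriv {r : ℝ} (hr : 0 < r) : HasDerivAt (fun r => (c r).2)
      (4 * π * (r ^ 2 * G r (c r).1)) r :=
    (hasDerivWithinAt_snd (hc r hr).2.hasDerivWithinAt).hasDerivAt univ_mem
  have snd_eq_mass : EqOn (fun r => (c r).2) (matterMass G fun r => (c r).1) (Ioi 0) := by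
    refine isOpen_Ioi.eqOn_of_deriv_eq isPreconnected_Ioi
      (fun r hr => (snd_deriv hr).differentiableAt.differentiableWithinAt)
      (fun r hr => (mass_deriv hr).differentiableAt.differentiableWithinAt)
      (fun r hr => (snd_deriv hr).deriv.trans (mass_deriv hr).deriv.symm) ha ?_
    simp only [hca a le_rfl, matterMass_eq_zero hG fun _ hs => inside hs]
  refine ⟨fun r => (c r).1, congrArg Prod.fst (hca 0 ha.le), y_smooth, fun r hr => ?_⟩
  rw [← snd_eq_mass hr]
  exact ⟨(hc r hr).1, (hasDerivWithinAt_fst (hc r hr).2.hasDerivWithinAt).hasDerivAt univ_mem⟩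

theorem quasiShell_iff {k ℓ L0 : ℝ} {y : ℝ → ℝ} :
    QuasiShell k ℓ L0 y ↔ ContDiffOn ℝ 1 y (Ici 0) ∧
      IsShellSolution (fun r η => rho k ℓ L0 (fun _ => η) r)
        (fun r η => pres k ℓ L0 (fun _ => η) r) y :=
  and_congr_right fun _ => forall₂_congr fun _ hr =>
    and_congr_left fun _ => ⟨fun h => ⟨hr, h⟩, fun h => h.2⟩

end ShellSolution

/-- For every initial value `y₀` there exists a unique quasi shell
solution `y` with `y(0) = y₀`; its matter quantities vanish on `(0, R₀]`. -/
theorem quasi_shell_existence_uniqueness (k ℓ L0 : ℝ)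
    (hk : 0 ≤ k) (hl : -(1 / 2) ≤ ℓ) (hL : 0 < L0) (y0 : ℝ) :
    ∃ y : ℝ → ℝ, y 0 = y0 ∧ QuasiShell k ℓ L0 y ∧
      (∀ r, 0 < r → r ≤ innerRadius L0 y → rho k ℓ L0 y r = 0 ∧ pres k ℓ L0 y r = 0) ∧
      ∀ z : ℝ → ℝ, z 0 = y0 → QuasiShell k ℓ L0 z → ∀ r ≥ (0 : ℝ), z r = y r := by
  have hS : 0 < √L0 := Real.sqrt_pos.2 hL
  have hG := isMatterFunction_rho hk hl hL.le
  have hP := isMatterFunction_pres hk hl hL.le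
  obtain ⟨y, hy0, hy_smooth, hy⟩ := exists_isShellSolution hG hP hS y0
  have hy_cont : ContinuousOn y (Ici 0) := hy_smooth.continuous.continuousOn
  refine ⟨y, hy0, quasiShell_iff.2 ⟨hy_smooth.contDiffOn, hy⟩, fun r hr hrR => ?_,
    fun z hz0 hz => ?_⟩
  · have no_matter : r * exp (y r) ≤ √L0 := hy.mul_exp_le hG hP hy_cont ⟨hr, hrR⟩
    exact ⟨hG.eq_zero r hr (y r) no_matter, hP.eq_zero r hr (y r) no_matter⟩
  · obtain ⟨hz_smooth, hz⟩ := quasiShell_iff.1 hz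
    exact hz.eqOn hG hP hS hz_smooth.continuousOn hy hy_cont (hz0.trans hy0.symm)
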